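/- Let f be a meromorphic function on ℂ with f(0) ≠ 0, ∞, let c ∈ ℂ, let 0 < δ < 1, r ≥ 1 and s > r + |c|. Then m(r, f(z+c)/f(z)) ≤ ( 2|c|/(s − r − |c|) + 2|c|^δ/(δ(1−δ) r^δ) ) · ( n(s,f) + n(s, 1/f) ) + ( 4|c|s/(s − r − |c|)² ) · ( T(s,f) + log⁺(1/|f(0)|) ), where n(s,f) and n(s,1/f) denote the number of poles and zeros, respectively, of f in |z| ≤ s, counted with multiplicity. -/

import Mathlib

open MeasureTheory Filter Topology Metric

noncomputable section

/-- Positive part of the logarithm: `log⁺ x = max (log x) 0`. -/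
def logPlus (x : ℝ) : ℝ := max (Real.log x) 0

/-- The point `r e^{iθ}` on the circle of radius `r`. -/
def circ (r θ : ℝ) : ℂ := (r : ℂ) * Complex.exp (θ * Complex.I)

/-- Nevanlinna proximity function `m(r, f)`. -/
def nevm (f : ℂ → ℂ) (r : ℝ) : ℝ :=
  (2 * Real.pi)⁻¹ * ∫ θ in (0:ℝ)..(2 * Real.pi), logPlus ‖f (circ r θ)‖

/-- Order of the pole of `f` at `x` (`0` if `f` extends analytically over `x`);
determined through the punctured neighbourhood of `x`. -/
def poleOrd (f : ℂ → ℂ) (x : ℂ) : ℕ :=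
  sInf {n : ℕ | ∃ g : ℂ → ℂ, AnalyticAt ℂ g x ∧
    ∀ᶠ w in 𝓝[≠] x, (w - x) ^ n * f w = g w}

/-- Unintegrated counting function `n(r, f)`: number of poles of `f` in `|z| ≤ r`,
counted with multiplicity. -/
def nevn (f : ℂ → ℂ) (r : ℝ) : ℕ := ∑ᶠ z ∈ closedBall (0:ℂ) r, poleOrd f z

/-- Integrated counting function `N(r, f)`. -/
def nevN (f : ℂ → ℂ) (r : ℝ) : ℝ :=
  (∫ t in (0:ℝ)..r, ((nevn f t : ℝ) - (nevn f 0 : ℝ)) / t) + (nevn f 0 : ℝ) * Real.log r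

/-- Nevanlinna characteristic `T(r, f) = m(r, f) + N(r, f)`. -/
def nevT (f : ℂ → ℂ) (r : ℝ) : ℝ := nevm f r + nevN f r

/-- A subset of `(0, ∞)` has finite logarithmic measure: `∫_E dr/r < ∞`. -/
def FinLogMeasure (E : Set ℝ) : Prop :=
  E ⊆ Set.Ioi 0 ∧ ∫⁻ r in E, ENNReal.ofReal r⁻¹ < ⊤

/-- `f` is a non-constant function. -/
def Nonconstant (f : ℂ → ℂ) : Prop := ¬ ∃ a : ℂ, ∀ z : ℂ, f z = a

/-- `f` has finite order: `limsup_{r→∞} log T(r,f) / log r < ∞`. -/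
def FiniteOrder (f : ℂ → ℂ) : Prop :=
  IsBoundedUnder (· ≤ ·) atTop fun r : ℝ => Real.log (nevT f r) / Real.log r

end


lemma aux_log_diff_le {x y : ℂ} (hx : x ≠ 0) (hy : y ≠ 0) :
    Real.log ‖x‖ - Real.log ‖y‖ ≤ Real.log (1 + ‖x - y‖ / ‖y‖) := by
  have h1 : 0 < ‖x‖ := norm_pos_iff.2 hx
  have h2 : 0 < ‖y‖ := norm_pos_iff.2 hy
  rw [← Real.log_div h1.ne' h2.ne']
  apply Real.log_le_log (by positivity)
  rw [div_le_iff₀ h2, add_mul, div_mul_cancel₀ _ h2.ne', one_mul]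
  have := norm_add_le y (x - y)
  simpa using this

lemma aux_log_one_add_le {t : ℝ} (ht : 0 ≤ t) : Real.log (1 + t) ≤ t := by
  have := Real.log_le_sub_one_of_pos (show 0 < 1 + t by linarith)
  linarith

lemma aux_log_one_add_le_rpow {t δ : ℝ} (ht : 0 ≤ t) (h0 : 0 < δ) (h1 : δ < 1) :
    Real.log (1 + t) ≤ t ^ δ / δ := by
  rw [le_div_iff₀ h0, mul_comm, ← Real.log_rpow (by linarith)]
  have h2 : (1 + t) ^ δ ≤ 1 + t ^ δ := by
    lift t to NNReal using ht
    have := NNReal.rpow_add_le_add_rpow 1 t h0.le h1.le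
    rw [NNReal.one_rpow] at this
    exact_mod_cast this
  exact (Real.log_le_log (by positivity) h2).trans (aux_log_one_add_le (by positivity))

lemma aux_quarter {h : ℝ → ℝ} {C δ : ℝ} (hm : Measurable h) (hn : ∀ x, 0 ≤ h x) (hC : 0 < C)
    (h1 : δ < 1)
    (hb : ∀ x, 0 < x → x ≤ Real.pi / 2 → h x ≤ (C * x) ^ (-δ)) :
    IntervalIntegrable h volume 0 (Real.pi / 2) ∧
    ∫ x in (0:ℝ)..(Real.pi / 2), h x ≤ C ^ (-δ) * ((Real.pi / 2) ^ (1 - δ) / (1 - δ)) := by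
  have hpi := Real.pi_pos
  have hI : IntervalIntegrable (fun x : ℝ => C ^ (-δ) * x ^ (-δ)) volume 0 (Real.pi / 2) :=
    (intervalIntegral.intervalIntegrable_rpow' (r := -δ) (by linarith)).const_mul _
  have hb' : ∀ x ∈ Set.Ioc 0 (Real.pi / 2), h x ≤ C ^ (-δ) * x ^ (-δ) := by
    intro x hx
    rw [← Real.mul_rpow hC.le hx.1.le]
    exact hb x hx.1 hx.2
  have hI2 : IntervalIntegrable h volume 0 (Real.pi / 2) := by
    refine hI.mono_fun hm.aestronglyMeasurable ?_
    rw [Set.uIoc_of_le (by positivity)]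
    filter_upwards [ae_restrict_mem measurableSet_Ioc] with x hx
    rw [Real.norm_of_nonneg (hn x)]
    exact (hb' x hx).trans (le_abs_self _)
  refine ⟨hI2, ?_⟩
  have : ∫ x in (0:ℝ)..(Real.pi / 2), C ^ (-δ) * x ^ (-δ) = C ^ (-δ) * ((Real.pi / 2) ^ (1 - δ) / (1 - δ)) := by
    rw [intervalIntegral.integral_const_mul, integral_rpow (by left; linarith)]
    rw [Real.zero_rpow (by linarith)]
    rw [show -δ + 1 = 1 - δ by ring, sub_zero]
  rw [← this]
  apply intervalIntegral.integral_mono_on_of_le_Ioo (by positivity) hI2 hI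
  intro x hx
  exact hb' x ⟨hx.1, hx.2.le⟩

lemma aux_full {h : ℝ → ℝ} {C δ : ℝ} (hm : Measurable h) (hn : ∀ x, 0 ≤ h x) (hC : 0 < C)
    (h0 : 0 < δ) (h1 : δ < 1)
    (hb : ∀ x, Real.sin x ≠ 0 → h x ≤ (C * |Real.sin x|) ^ (-δ)) :
    IntervalIntegrable h volume 0 (2 * Real.pi) ∧
    (2 * Real.pi)⁻¹ * ∫ x in (0:ℝ)..(2 * Real.pi), h x ≤ C ^ (-δ) / (1 - δ) := by
  have hpi := Real.pi_pos
  have key : ∀ g : ℝ → ℝ, Measurable g → (∀ x, |Real.sin (g x)| = |Real.sin x|) →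
      ∀ x, 0 < x → x ≤ Real.pi / 2 → h (g x) ≤ ((C * (2 / Real.pi)) * x) ^ (-δ) := by
    intro g hg hs x hx hx2
    have hsin : 0 < Real.sin x := Real.sin_pos_of_pos_of_lt_pi hx (by linarith)
    have h3 : Real.sin (g x) ≠ 0 := by
      intro h; have := hs x; rw [h, abs_zero, abs_of_pos hsin] at this; linarith
    refine (hb _ h3).trans ?_
    rw [hs x, abs_of_pos hsin]
    apply Real.rpow_le_rpow_of_nonpos (by positivity) _ (by linarith)
    rw [mul_assoc]
    exact mul_le_mul_of_nonneg_left (Real.mul_le_sin hx.le hx2) hC.le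
  have Q : ∀ g : ℝ → ℝ, Measurable g → (∀ x, |Real.sin (g x)| = |Real.sin x|) → _ :=
    fun g hg hs => aux_quarter (h := fun x => h (g x)) (δ := δ) (hm.comp hg) (fun x => hn _)
      (show 0 < C * (2 / Real.pi) by positivity) h1 (key g hg hs)
  obtain ⟨i1, j1⟩ := Q (fun x => x) measurable_id (fun x => rfl)
  obtain ⟨i2, j2⟩ := Q (fun x => Real.pi - x) (by fun_prop) (fun x => by rw [Real.sin_pi_sub])
  obtain ⟨i3, j3⟩ := Q (fun x => Real.pi + x) (by fun_prop)
    (fun x => by rw [add_comm, Real.sin_add_pi, abs_neg])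
  obtain ⟨i4, j4⟩ := Q (fun x => 2 * Real.pi - x) (by fun_prop)
    (fun x => by rw [Real.sin_two_pi_sub, abs_neg])
  rw [intervalIntegral.integral_comp_sub_left] at j2 j4
  rw [intervalIntegral.integral_comp_add_left] at j3
  have k2 : IntervalIntegrable h volume (Real.pi - 0) (Real.pi - Real.pi / 2) := by
    simpa using i2.comp_sub_left Real.pi
  have k4 : IntervalIntegrable h volume (2 * Real.pi - 0) (2 * Real.pi - Real.pi / 2) := by
    simpa using i4.comp_sub_left (2 * Real.pi)
  have k3 : IntervalIntegrable h volume (0 + Real.pi) (Real.pi / 2 + Real.pi) := by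
    simpa using i3.comp_sub_right Real.pi
  rw [show Real.pi - 0 = Real.pi by ring, show Real.pi - Real.pi / 2 = Real.pi / 2 by ring] at *
  rw [show 2 * Real.pi - 0 = 2 * Real.pi by ring] at *
  rw [show 2 * Real.pi - Real.pi / 2 = Real.pi + Real.pi / 2 by ring] at *
  rw [show 0 + Real.pi = Real.pi by ring, show Real.pi / 2 + Real.pi = Real.pi + Real.pi / 2 by ring] at *
  rw [show Real.pi + 0 = Real.pi by ring] at *
  have l2 := k2.symm
  have l4 := k4.symm
  have a1 := i1.trans l2
  have a2 := a1.trans k3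
  refine ⟨a2.trans l4, ?_⟩
  rw [← intervalIntegral.integral_add_adjacent_intervals a2 l4,
    ← intervalIntegral.integral_add_adjacent_intervals a1 k3,
    ← intervalIntegral.integral_add_adjacent_intervals i1 l2]
  have e : (C * (2 / Real.pi)) ^ (-δ) * ((Real.pi / 2) ^ (1 - δ) / (1 - δ))
      = C ^ (-δ) / (1 - δ) * (Real.pi / 2) := by
    rw [Real.mul_rpow hC.le (by positivity), show 2 / Real.pi = (Real.pi / 2)⁻¹ by rw [inv_div],
      Real.inv_rpow (by positivity), ← Real.rpow_neg (by positivity), neg_neg,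
      show Real.pi / 2 = (Real.pi / 2) ^ (1 : ℝ) by simp,
      ← Real.rpow_mul (by positivity), ← Real.rpow_mul (by positivity)]
    have : (Real.pi / 2) ^ (1 : ℝ) = (Real.pi / 2) ^ (1 * δ) * (Real.pi / 2) ^ (1 * (1 - δ)) := by
      rw [← Real.rpow_add (by positivity)]; ring_nf
    rw [this]; ring
  rw [e] at j1 j2 j3 j4
  rw [inv_mul_le_iff₀ (by positivity)]
  linarith

lemma aux_circle (a : ℂ) {r δ : ℝ} (hr : 0 < r) (h0 : 0 < δ) (h1 : δ < 1) :
    CircleIntegrable (fun z : ℂ => ‖z - a‖ ^ (-δ)) 0 r ∧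
    Real.circleAverage (fun z : ℂ => ‖z - a‖ ^ (-δ)) 0 r ≤ r ^ (-δ) / (1 - δ) := by
  have F := aux_full (h := fun θ => ‖circleMap 0 r (θ + a.arg) - a‖ ^ (-δ)) (C := r) (δ := δ)
    (by
      have : Continuous (fun θ => circleMap 0 r (θ + a.arg)) := by fun_prop
      have h2 := this.measurable
      fun_prop) (fun x => by positivity) hr h0 h1 (by
      intro x hx
      apply Real.rpow_le_rpow_of_nonpos (by positivity) _ (by linarith)
      have e : circleMap 0 r (x + a.arg) - a
          = (r * Complex.exp (x * Complex.I) - ‖a‖) * Complex.exp (a.arg * Complex.I) := by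
        conv_lhs => rw [← Complex.norm_mul_exp_arg_mul_I a]
        simp only [circleMap, zero_add, sub_mul, Complex.ofReal_add, add_mul, Complex.exp_add]
        rw [Complex.norm_mul_exp_arg_mul_I a]
        ring
      rw [e, norm_mul, Complex.norm_exp_ofReal_mul_I, mul_one]
      have := Complex.abs_im_le_norm (r * Complex.exp (x * Complex.I) - ‖a‖)
      simpa [Complex.exp_ofReal_mul_I_im, abs_mul, abs_of_pos hr] using this)
  refine ⟨?_, ?_⟩
  · have hp : Function.Periodic (fun θ => ‖circleMap 0 r θ - a‖ ^ (-δ)) (2 * Real.pi) := by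
      intro θ
      simp only [periodic_circleMap 0 r θ]
    have h3 := F.1.comp_sub_right a.arg
    simp only [sub_add_cancel] at h3
    have h4 : IntervalIntegrable (fun θ => ‖circleMap 0 r θ - a‖ ^ (-δ)) volume
      (0 + a.arg) (0 + a.arg + 2 * Real.pi) := by convert h3 using 1; ring
    exact hp.intervalIntegrable (by positivity) h4 _ _
  · rw [Real.circleAverage_eq_integral_add a.arg]
    exact F.2

lemma aux_poleOrd {f : ℂ → ℂ} {x : ℂ} (hf : MeromorphicAt f x) (ht : meromorphicOrderAt f x ≠ ⊤) :
    poleOrd f x = (-(meromorphicOrderAt f x).untop₀).toNat := by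
  obtain ⟨k, hk⟩ := WithTop.ne_top_iff_exists.1 ht
  rw [← hk, WithTop.untop₀_coe]
  obtain ⟨g, hg, hg0, hfg⟩ := (meromorphicOrderAt_eq_int_iff hf).1 hk.symm
  unfold poleOrd
  have : {n : ℕ | ∃ g : ℂ → ℂ, AnalyticAt ℂ g x ∧
      ∀ᶠ w in 𝓝[≠] x, (w - x) ^ n * f w = g w} = Set.Ici (-k).toNat := by
    ext n
    simp only [Set.mem_setOf_eq, Set.mem_Ici, Int.toNat_le]
    constructor
    · rintro ⟨G, hG, h⟩
      have h1 : meromorphicOrderAt (fun w => (w - x) ^ n * f w) x = ((n + k : ℤ) : WithTop ℤ) := by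
        rw [meromorphicOrderAt_eq_int_iff (by fun_prop)]
        refine ⟨g, hg, hg0, ?_⟩
        filter_upwards [hfg, self_mem_nhdsWithin] with z hz hzx
        have : z - x ≠ 0 := sub_ne_zero.2 hzx
        rw [hz, zpow_add₀ this]
        simp [mul_assoc]
      rw [meromorphicOrderAt_congr h] at h1
      have h2 := hG.meromorphicOrderAt_nonneg
      rw [h1] at h2
      have : (0:ℤ) ≤ n + k := by exact_mod_cast h2
      linarith
    · intro h
      refine ⟨fun w => (w - x) ^ (n + k).toNat * g w, by fun_prop, ?_⟩
      filter_upwards [hfg, self_mem_nhdsWithin] with z hz hzx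
      have : z - x ≠ 0 := sub_ne_zero.2 hzx
      rw [hz, ← zpow_natCast, ← zpow_natCast, Int.toNat_of_nonneg (by linarith), zpow_add₀ this]
      simp [mul_assoc]
  rw [this, csInf_Ici]

lemma aux_order_ne_top {f : ℂ → ℂ} (hf : MeromorphicOn f Set.univ) (h0 : AnalyticAt ℂ f 0)
    (hf0 : f 0 ≠ 0) (x : ℂ) : meromorphicOrderAt f x ≠ ⊤ := by
  have h := (hf.exists_meromorphicOrderAt_ne_top_iff_forall
    ⟨Set.univ_nonempty, isPreconnected_univ⟩).1 ⟨⟨0, trivial⟩, by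
      rw [h0.meromorphicNFAt.meromorphicOrderAt_eq_zero_iff.2 hf0]; simp⟩
  exact h ⟨x, trivial⟩

/-- the divisor of `f` on the closed ball -/
lemma aux_nevn {f : ℂ → ℂ} (hf : MeromorphicOn f Set.univ) (ht : ∀ x, meromorphicOrderAt f x ≠ ⊤)
    {s t : ℝ} (hts : t ≤ s) (S : Finset ℂ)
    (hS : ∀ u, MeromorphicOn.divisor f (closedBall 0 s) u ≠ 0 → u ∈ S) :
    (nevn f t : ℝ) = ∑ u ∈ S, if ‖u‖ ≤ t then
      (((-(MeromorphicOn.divisor f (closedBall 0 s) u)).toNat : ℕ) : ℝ) else 0 := by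
  have hm : MeromorphicOn f (closedBall 0 s) := fun x _ => hf x trivial
  have : nevn f t = ∑ u ∈ S, if ‖u‖ ≤ t then
      ((-(MeromorphicOn.divisor f (closedBall 0 s) u)).toNat : ℕ) else 0 := by
    unfold nevn
    rw [finsum_mem_def, finsum_eq_sum_of_support_subset (s := S)]
    · apply Finset.sum_congr rfl
      intro u hu
      by_cases h : ‖u‖ ≤ t
      · have h1 : u ∈ closedBall (0:ℂ) t := by simpa using h
        have h2 : u ∈ closedBall (0:ℂ) s := by simpa using h.trans hts
        rw [Set.indicator_of_mem h1, if_pos h, aux_poleOrd (hf u trivial) (ht u),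
          MeromorphicOn.divisor_apply hm h2]
      · have h1 : u ∉ closedBall (0:ℂ) t := by simpa using h
        rw [Set.indicator_of_notMem h1, if_neg h]
    · intro u hu
      rw [Function.mem_support, Set.indicator_apply_ne_zero] at hu
      have h2 : u ∈ closedBall (0:ℂ) s := closedBall_subset_closedBall hts hu.1
      apply hS
      rw [MeromorphicOn.divisor_apply hm h2]
      intro h
      apply hu.2
      rw [aux_poleOrd (hf u trivial) (ht u), h]; simp
  rw [this]
  push_cast
  rfl

lemma aux_nevN {f : ℂ → ℂ} (hf : MeromorphicOn f Set.univ) (ht : ∀ x, meromorphicOrderAt f x ≠ ⊤)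
    (h0 : meromorphicOrderAt f 0 = 0) {s : ℝ} (hs : 0 < s) (S : Finset ℂ)
    (hS : ∀ u, MeromorphicOn.divisor f (closedBall 0 s) u ≠ 0 ↔ u ∈ S) :
    nevN f s = ∑ u ∈ S,
      (((-(MeromorphicOn.divisor f (closedBall 0 s) u)).toNat : ℕ) : ℝ) * Real.log (s * ‖u‖⁻¹) := by
  have hm : MeromorphicOn f (closedBall 0 s) := fun x _ => hf x trivial
  have hu0 : ∀ u ∈ S, 0 < ‖u‖ ∧ ‖u‖ ≤ s := by
    intro u hu
    have hu' := (hS u).2 hu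
    have hmem : u ∈ closedBall (0:ℂ) s := by
      by_contra h
      exact hu' (Function.locallyFinsuppWithin.apply_eq_zero_of_notMem _ h)
    refine ⟨norm_pos_iff.2 ?_, by simpa using hmem⟩
    rintro rfl
    rw [MeromorphicOn.divisor_apply hm hmem, h0] at hu'
    simp at hu'
  have hn0 : (nevn f 0 : ℝ) = 0 := by
    rw [aux_nevn hf ht hs.le S (fun u => (hS u).1)]
    apply Finset.sum_eq_zero
    intro u hu
    rw [if_neg (not_le.2 (hu0 u hu).1)]
  unfold nevN
  rw [hn0]
  simp only [sub_zero, zero_mul, add_zero]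
  set p : ℂ → ℝ := fun u => (((-(MeromorphicOn.divisor f (closedBall 0 s) u)).toNat : ℕ) : ℝ) with hp
  have e1 : ∫ t in (0:ℝ)..s, (nevn f t : ℝ) / t
      = ∫ t in (0:ℝ)..s, ∑ u ∈ S, p u * (Set.Ici ‖u‖).indicator (fun t => t⁻¹) t := by
    apply intervalIntegral.integral_congr
    intro t htt
    rw [Set.uIcc_of_le hs.le] at htt
    simp only
    rw [aux_nevn hf ht htt.2 S (fun u => (hS u).1), Finset.sum_div]
    apply Finset.sum_congr rfl
    intro u hu
    by_cases h : ‖u‖ ≤ t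
    · rw [if_pos h, Set.indicator_of_mem (by exact h)]; rfl
    · rw [if_neg h, Set.indicator_of_notMem (by exact h)]; simp
  have key : ∀ u ∈ S, IntervalIntegrable ((Set.Ici ‖u‖).indicator (fun t : ℝ => t⁻¹)) volume 0 s ∧
      ∫ t in (0:ℝ)..s, (Set.Ici ‖u‖).indicator (fun t : ℝ => t⁻¹) t = Real.log (s * ‖u‖⁻¹) := by
    intro u hu
    obtain ⟨h1, h2⟩ := hu0 u hu
    have i1 : IntervalIntegrable ((Set.Ici ‖u‖).indicator (fun t : ℝ => t⁻¹)) volume 0 ‖u‖ := by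
      refine (intervalIntegrable_const (c := (0:ℝ))).congr_ae ?_
      rw [Set.uIoc_of_le h1.le]
      have := ae_restrict_of_ae (s := Set.Ioc 0 ‖u‖) (Measure.ae_ne volume ‖u‖)
      filter_upwards [this, ae_restrict_mem measurableSet_Ioc] with t h3 h4
      rw [Set.indicator_of_notMem]
      simp only [Set.mem_Ici, not_le]
      exact lt_of_le_of_ne h4.2 h3
    have z1 : ∫ t in (0:ℝ)..‖u‖, (Set.Ici ‖u‖).indicator (fun t : ℝ => t⁻¹) t = 0 := by
      apply intervalIntegral.integral_zero_ae
      filter_upwards [Measure.ae_ne volume ‖u‖] with t h3 h4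
      rw [Set.uIoc_of_le h1.le] at h4
      rw [Set.indicator_of_notMem]
      simp only [Set.mem_Ici, not_le]
      exact lt_of_le_of_ne h4.2 h3
    have hEq : Set.EqOn (fun t : ℝ => t⁻¹) ((Set.Ici ‖u‖).indicator (fun t : ℝ => t⁻¹)) (Set.uIcc ‖u‖ s) := by
      intro t h3
      rw [Set.uIcc_of_le h2] at h3
      rw [Set.indicator_of_mem (by exact h3.1)]
    have i2' : IntervalIntegrable (fun t : ℝ => t⁻¹) volume ‖u‖ s := by
      apply ContinuousOn.intervalIntegrable
      apply continuousOn_inv₀.mono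
      intro t h3
      rw [Set.uIcc_of_le h2] at h3
      exact (h1.trans_le h3.1).ne'
    have i2 : IntervalIntegrable ((Set.Ici ‖u‖).indicator (fun t : ℝ => t⁻¹)) volume ‖u‖ s :=
      i2'.congr (hEq.mono Set.uIoc_subset_uIcc)
    refine ⟨i1.trans i2, ?_⟩
    rw [← intervalIntegral.integral_add_adjacent_intervals i1 i2, z1, zero_add,
      ← intervalIntegral.integral_congr hEq, integral_inv_of_pos h1 hs]
    rfl
  rw [e1, intervalIntegral.integral_finsetSum (fun u hu => (key u hu).1.const_mul _)]
  apply Finset.sum_congr rfl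
  intro u hu
  rw [intervalIntegral.integral_const_mul, (key u hu).2]

lemma aux_blaschke_pos {s : ℝ} {u w : ℂ} (hu : ‖u‖ ≤ s) :
    s * (s - ‖w‖) ≤ ‖(s:ℂ) ^ 2 - (starRingEnd ℂ) u * w‖ := by
  have hs : 0 ≤ s := (norm_nonneg u).trans hu
  have h1 : ‖(s:ℂ) ^ 2‖ - ‖(starRingEnd ℂ) u * w‖ ≤ ‖(s:ℂ) ^ 2 - (starRingEnd ℂ) u * w‖ :=
    norm_sub_norm_le _ _
  rw [norm_mul, Complex.norm_conj, norm_pow, Complex.norm_real, Real.norm_of_nonneg hs] at h1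
  have := mul_le_mul_of_nonneg_right hu (norm_nonneg w)
  nlinarith

lemma aux_kernel {s : ℝ} {u w : ℂ} (hu : ‖u‖ ≤ s) (hw : w ∈ ball (0:ℂ) s) :
    Real.circleAverage ((Complex.re ∘ herglotzRieszKernel 0 w) • (fun z => Real.log ‖z - u‖)) 0 s
      = Real.log (‖(s:ℂ) ^ 2 - (starRingEnd ℂ) u * w‖ / s) := by
  have hs : 0 < s := pos_of_mem_ball hw
  rcases hu.lt_or_eq with h | h
  · have hub : u ∈ ball (0:ℂ) s := by simpa using h
    have e : Real.circleAverage ((Complex.re ∘ herglotzRieszKernel 0 w) • (fun z => Real.log ‖z - u‖)) 0 s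
      = Real.circleAverage ((Complex.re ∘ herglotzRieszKernel 0 w) •
        (fun z => Real.log ‖((s:ℂ) ^ 2 - (starRingEnd ℂ) u * z) / s‖)) 0 s := by
      apply Real.circleAverage_congr_sphere
      intro z hz
      rw [abs_of_pos hs] at hz
      have h1 := Complex.norm_canonicalFactor_eval_circle_eq_one hub hz
      rw [Complex.canonicalFactor_apply, ← div_div, norm_div] at h1
      have h2 : ‖z - u‖ ≠ 0 := by
        intro h2; rw [h2, div_zero] at h1; exact zero_ne_one h1
      rw [div_eq_one_iff_eq h2] at h1
      simp only [Pi.smul_apply', h1]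
    rw [e, InnerProductSpace.HarmonicOnNhd.circleAverage_re_herglotzRieszKernel_smul _ hw,
      norm_div, Complex.norm_real, Real.norm_of_nonneg hs.le]
    intro z hz
    refine AnalyticAt.harmonicAt_log_norm (f := fun z => ((s:ℂ) ^ 2 - (starRingEnd ℂ) u * z) / s) (by fun_prop) ?_
    rw [div_ne_zero_iff]
    refine ⟨?_, by exact_mod_cast hs.ne'⟩
    intro h0
    have hzs : ‖z‖ ≤ s := by simpa using hz
    have h3 : ‖(s:ℂ)^2‖ = ‖(starRingEnd ℂ) u * z‖ := by rw [sub_eq_zero.1 h0]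
    rw [norm_mul, Complex.norm_conj, norm_pow, Complex.norm_real, Real.norm_of_nonneg hs.le] at h3
    have h4 := mul_le_mul_of_nonneg_left hzs (norm_nonneg u)
    nlinarith
  · have := circleAverage_re_herglotzRieszKernel_mul_log (w := w) (ρ := u) (c := 0) (R := s)
      (by simpa using h) hw
    rw [smul_eq_mul, this]
    congr 1
    rw [eq_div_iff hs.ne']
    have e : (s:ℂ) ^ 2 - (starRingEnd ℂ) u * w = (starRingEnd ℂ) u * (u - w) := by
      rw [mul_sub, ← h, mul_comm _ u, Complex.mul_conj']
    rw [e, norm_mul, Complex.norm_conj, h, norm_sub_rev, mul_comm]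

lemma aux_kernel_cont {s : ℝ} {w : ℂ} (hw : w ∈ ball (0:ℂ) s) :
    ContinuousOn (Complex.re ∘ herglotzRieszKernel 0 w) (sphere 0 |s|) :=
  Complex.continuous_re.comp_continuousOn (continuousOn_herglotzRieszKernel_sphere hw)

lemma aux_PJ {f : ℂ → ℂ} (hf : MeromorphicOn f Set.univ) (ht : ∀ x, meromorphicOrderAt f x ≠ ⊤)
    {s : ℝ} (hs : 0 < s) (S : Finset ℂ)
    (hS : ∀ u, MeromorphicOn.divisor f (closedBall 0 s) u ≠ 0 ↔ u ∈ S) :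
    ∃ B : Set ℂ, B.Finite ∧ ∀ w ∈ ball (0:ℂ) s, w ∉ B → Real.log ‖f w‖
      = Real.circleAverage ((Complex.re ∘ herglotzRieszKernel 0 w) • (fun z => Real.log ‖f z‖)) 0 s
      + ∑ u ∈ S, (MeromorphicOn.divisor f (closedBall 0 s) u : ℝ) *
        (Real.log ‖w - u‖ - Real.log (‖(s:ℂ) ^ 2 - (starRingEnd ℂ) u * w‖ / s)) := by
  have hm : MeromorphicOn f (closedBall 0 s) := fun x _ => hf x trivial
  set D := MeromorphicOn.divisor f (closedBall 0 s) with hD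
  have hfin : D.support.Finite := D.finiteSupport (isCompact_closedBall 0 s)
  obtain ⟨g, hg, hg0, hfg⟩ := hm.extract_zeros_poles (fun u => ht u) hfin
  have hlog := MeromorphicOn.extract_zeros_poles_log hg0 hfg
  have hsum : (∑ᶠ u, (fun z : ℂ => (D u : ℝ) * Real.log ‖z - u‖)) =
      ∑ u ∈ S, (fun z : ℂ => (D u : ℝ) * Real.log ‖z - u‖) := by
    apply finsum_eq_sum_of_support_subset
    intro u hu
    rw [Finset.mem_coe, ← hS]
    intro h
    apply hu
    ext z
    simp [h]
  rw [← hD, hsum] at hlog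
  refine ⟨_, (isCompact_closedBall (0:ℂ) s).finite_sdiff_of_mem_codiscreteWithin hlog, ?_⟩
  intro w hw hwB
  have hwlog : Real.log ‖f w‖ = ∑ u ∈ S, (D u : ℝ) * Real.log ‖w - u‖ + Real.log ‖g w‖ := by
    by_contra h
    apply hwB
    refine ⟨ball_subset_closedBall hw, ?_⟩
    intro h2
    apply h
    have h3 : Real.log ‖f w‖ = (∑ u ∈ S, (fun z : ℂ => (D u : ℝ) * Real.log ‖z - u‖) +
      fun z => Real.log ‖g z‖) w := h2
    rw [h3]
    simp
  have hlogS : (fun z => Real.log ‖f z‖) =ᶠ[codiscreteWithin (sphere 0 |s|)]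
      (∑ u ∈ S, (fun z : ℂ => (D u : ℝ) * Real.log ‖z - u‖) + fun z => Real.log ‖g z‖) := by
    rw [abs_of_pos hs]
    exact codiscreteWithin_mono sphere_subset_closedBall hlog
  have hgs : MeromorphicOn g (sphere 0 |s|) := by
    rw [abs_of_pos hs]
    exact (hg.mono sphere_subset_closedBall).meromorphicOn
  have e1 : Real.circleAverage ((Complex.re ∘ herglotzRieszKernel 0 w) • (fun z => Real.log ‖f z‖)) 0 s
      = Real.circleAverage ((∑ u ∈ S, (fun z : ℂ => (D u : ℝ) • ((Complex.re ∘ herglotzRieszKernel 0 w) •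
        (fun z => Real.log ‖z - u‖)) z)) + (Complex.re ∘ herglotzRieszKernel 0 w) •
          (fun z => Real.log ‖g z‖)) 0 s := by
    apply Real.circleAverage_congr_codiscreteWithin _ hs.ne'
    filter_upwards [hlogS] with z hz
    simp only [Pi.smul_apply', hz, Pi.add_apply, Finset.sum_apply, smul_eq_mul, mul_add, Finset.mul_sum]
    congr 1
    apply Finset.sum_congr rfl
    intro u _
    ring
  have hci : ∀ u : ℂ, CircleIntegrable ((Complex.re ∘ herglotzRieszKernel 0 w) •
        (fun z => Real.log ‖z - u‖)) 0 s := fun u =>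
    (circleIntegrable_log_norm_sub_const s).continuousOn_smul (aux_kernel_cont hw)
  have hcu : ∀ u ∈ S, CircleIntegrable (fun z : ℂ => (D u : ℝ) • ((Complex.re ∘ herglotzRieszKernel 0 w) •
        (fun z => Real.log ‖z - u‖)) z) 0 s := fun u _ => (hci u).const_smul
  have e2 := Real.circleAverage_add (CircleIntegrable.sum S hcu)
    (hgs.circleIntegrable_log_norm.continuousOn_smul (aux_kernel_cont hw))
  rw [Real.circleAverage_sum hcu, InnerProductSpace.HarmonicOnNhd.circleAverage_re_herglotzRieszKernel_smul
    (fun z hz => (hg z hz).harmonicAt_log_norm (hg0 ⟨z, hz⟩)) hw] at e2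
  have e3 : ∀ u ∈ S, Real.circleAverage (fun z : ℂ => (D u : ℝ) • ((Complex.re ∘ herglotzRieszKernel 0 w) •
        (fun z => Real.log ‖z - u‖)) z) 0 s
        = (D u : ℝ) * Real.log (‖(s:ℂ) ^ 2 - (starRingEnd ℂ) u * w‖ / s) := by
    intro u hu
    rw [Real.circleAverage_fun_smul, smul_eq_mul, aux_kernel _ hw]
    by_contra h
    exact (hS u).2 hu (Function.locallyFinsuppWithin.apply_eq_zero_of_notMem _ (by simpa using h))
  rw [Finset.sum_congr rfl e3] at e2
  rw [e1, e2, hwlog]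
  simp only [mul_sub, Finset.sum_sub_distrib]
  ring

lemma aux_nevm (f : ℂ → ℂ) (r : ℝ) :
    nevm f r = Real.circleAverage (fun z => logPlus ‖f z‖) 0 r := by
  have : ∀ θ : ℝ, circ r θ = circleMap 0 r θ := fun θ => by simp [circ, circleMap]
  simp only [nevm, Real.circleAverage_def, this, smul_eq_mul]

lemma aux_logPlus (x : ℝ) : logPlus x = Real.posLog x := by
  rw [logPlus, Real.posLog, max_comm]

lemma aux_abs_log (x : ℝ) : |Real.log x| = 2 * logPlus x - Real.log x := by
  rw [logPlus]
  rcases le_total 0 (Real.log x) with h | h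
  · rw [abs_of_nonneg h, max_eq_left h]; ring
  · rw [abs_of_nonpos h, max_eq_right h]; ring

lemma aux_logsum_nonneg {s : ℝ} (hs : 0 < s) {u : ℂ} (hu : ‖u‖ ≤ s) :
    0 ≤ Real.log (s * ‖u‖⁻¹) := by
  rcases (norm_nonneg u).eq_or_lt with h | h
  · simp [← h]
  · apply Real.log_nonneg
    rw [← div_eq_mul_inv, le_div_iff₀ h]; linarith

lemma aux_toNat (n : ℤ) : (n : ℝ) = ((n.toNat : ℕ) : ℝ) - (((-n).toNat : ℕ) : ℝ) := by
  exact_mod_cast (Int.toNat_sub_toNat_neg n).symm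

lemma aux_A {f : ℂ → ℂ} (hf : MeromorphicOn f Set.univ) (ht : ∀ x, meromorphicOrderAt f x ≠ ⊤)
    (h0 : AnalyticAt ℂ f 0) (hf0 : f 0 ≠ 0)
    {s : ℝ} (hs : 0 < s) (S : Finset ℂ)
    (hS : ∀ u, MeromorphicOn.divisor f (closedBall 0 s) u ≠ 0 ↔ u ∈ S) :
    Real.circleAverage (fun z => |Real.log ‖f z‖|) 0 s ≤ 2 * (nevT f s + logPlus (1 / ‖f 0‖)) := by
  have hsb : ∀ u ∈ S, ‖u‖ ≤ s := by
    intro u hu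
    by_contra h
    exact (hS u).2 hu (Function.locallyFinsuppWithin.apply_eq_zero_of_notMem _ (by simpa using h))
  have ho : meromorphicOrderAt f 0 = 0 :=
    (h0.meromorphicOrderAt_eq ▸ by simp [h0.analyticOrderAt_eq_zero.2 hf0])
  have hN := aux_nevN hf ht ho hs S hS
  have hJ := MeromorphicOn.circleAverage_log_norm (f := f) (c := 0) (R := s) hs.ne'
    (fun x _ => hf x trivial)
  rw [abs_of_pos hs] at hJ
  have hD0 : MeromorphicOn.divisor f (closedBall 0 s) 0 = 0 := by
    rw [MeromorphicOn.divisor_apply (fun x _ => hf x trivial) (by simp [hs.le]), ho]; rfl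
  rw [hD0, AnalyticAt.meromorphicTrailingCoeffAt_of_ne_zero h0 hf0] at hJ
  have hsum : ∑ᶠ u, (MeromorphicOn.divisor f (closedBall 0 s) u : ℝ) * Real.log (s * ‖0 - u‖⁻¹)
      = ∑ u ∈ S, (MeromorphicOn.divisor f (closedBall 0 s) u : ℝ) * Real.log (s * ‖u‖⁻¹) := by
    simp only [zero_sub, norm_neg]
    apply finsum_eq_sum_of_support_subset
    intro u hu
    rw [Finset.mem_coe, ← hS]
    intro h
    apply hu
    simp [h]
  rw [hsum] at hJ
  have hNn : 0 ≤ nevN f s := by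
    rw [hN]
    exact Finset.sum_nonneg fun u hu => mul_nonneg (Nat.cast_nonneg _) (aux_logsum_nonneg hs (hsb u hu))
  have hge : - nevN f s ≤ ∑ u ∈ S, (MeromorphicOn.divisor f (closedBall 0 s) u : ℝ) * Real.log (s * ‖u‖⁻¹) := by
    rw [hN, ← Finset.sum_neg_distrib]
    apply Finset.sum_le_sum
    intro u hu
    rw [aux_toNat (MeromorphicOn.divisor f (closedBall 0 s) u), sub_mul]
    have := mul_nonneg (Nat.cast_nonneg (α := ℝ) (MeromorphicOn.divisor f (closedBall 0 s) u).toNat) (aux_logsum_nonneg hs (hsb u hu))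
    linarith
  have hms : MeromorphicOn f (sphere 0 |s|) := fun x _ => hf x trivial
  have hp := hms.circleIntegrable_posLog_norm
  have hp2 : CircleIntegrable (fun z => (2:ℝ) • logPlus ‖f z‖) 0 s := by
    simp only [aux_logPlus]; exact hp.const_smul
  have hA : Real.circleAverage (fun z => |Real.log ‖f z‖|) 0 s
      = 2 * nevm f s - Real.circleAverage (fun z => Real.log ‖f z‖) 0 s := by
    rw [aux_nevm, ← smul_eq_mul, ← Real.circleAverage_fun_smul,
      ← Real.circleAverage_fun_sub hp2 hms.circleIntegrable_log_norm]
    simp only [aux_abs_log, smul_eq_mul]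
  have hl : - Real.log ‖f 0‖ ≤ logPlus (1 / ‖f 0‖) := by
    rw [logPlus, one_div, Real.log_inv]; exact le_max_left _ _
  have hl0 : 0 ≤ logPlus (1 / ‖f 0‖) := le_max_right _ _
  rw [hA, hJ, nevT]
  push_cast
  linarith

lemma aux_counts {f : ℂ → ℂ} (hf : MeromorphicOn f Set.univ) (ht : ∀ x, meromorphicOrderAt f x ≠ ⊤)
    {s : ℝ} (S : Finset ℂ)
    (hS : ∀ u, MeromorphicOn.divisor f (closedBall 0 s) u ≠ 0 ↔ u ∈ S) :
    (nevn f s : ℝ) = ∑ u ∈ S, (((-(MeromorphicOn.divisor f (closedBall 0 s) u)).toNat : ℕ) : ℝ) ∧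
    (nevn (fun z => (f z)⁻¹) s : ℝ)
      = ∑ u ∈ S, (((MeromorphicOn.divisor f (closedBall 0 s) u).toNat : ℕ) : ℝ) := by
  have hsb : ∀ u ∈ S, ‖u‖ ≤ s := by
    intro u hu
    by_contra h
    exact (hS u).2 hu (Function.locallyFinsuppWithin.apply_eq_zero_of_notMem _ (by simpa using h))
  have hfi : MeromorphicOn (fun z => (f z)⁻¹) Set.univ := fun x hx => (hf x hx).fun_inv
  have hti : ∀ x, meromorphicOrderAt (fun z => (f z)⁻¹) x ≠ ⊤ := by
    intro x
    have e : (fun z => (f z)⁻¹) = f⁻¹ := rfl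
    rw [e, meromorphicOrderAt_inv]
    simpa using ht x
  have e : MeromorphicOn.divisor (fun z => (f z)⁻¹) (closedBall 0 s)
    = - MeromorphicOn.divisor f (closedBall 0 s) := MeromorphicOn.divisor_fun_inv
  constructor
  · rw [aux_nevn hf ht le_rfl S (fun u => (hS u).1)]
    exact Finset.sum_congr rfl fun u hu => if_pos (hsb u hu)
  · rw [aux_nevn hfi hti le_rfl S (fun u h => (hS u).1 (by rw [e] at h; simpa using h)), e]
    refine Finset.sum_congr rfl fun u hu => ?_
    rw [if_pos (hsb u hu)]
    simp

lemma aux_kdiff {f : ℂ → ℂ} (hf : MeromorphicOn f Set.univ) {r s : ℝ} {c z : ℂ}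
    (hs : r + ‖c‖ < s) (hz : ‖z‖ = r) :
    Real.circleAverage ((Complex.re ∘ herglotzRieszKernel 0 (z + c)) • (fun z => Real.log ‖f z‖)) 0 s
     - Real.circleAverage ((Complex.re ∘ herglotzRieszKernel 0 z) • (fun z => Real.log ‖f z‖)) 0 s
     ≤ 2 * ‖c‖ * s / (s - r - ‖c‖) ^ 2 * Real.circleAverage (fun z => |Real.log ‖f z‖|) 0 s ∧
    Real.circleAverage ((Complex.re ∘ herglotzRieszKernel 0 z) • (fun z => Real.log ‖f z‖)) 0 s
     - Real.circleAverage ((Complex.re ∘ herglotzRieszKernel 0 (z + c)) • (fun z => Real.log ‖f z‖)) 0 s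
     ≤ 2 * ‖c‖ * s / (s - r - ‖c‖) ^ 2 * Real.circleAverage (fun z => |Real.log ‖f z‖|) 0 s := by
  have hr0 : 0 ≤ r := hz ▸ norm_nonneg z
  have hc0 := norm_nonneg c
  have hs0 : 0 < s := by linarith
  have hzc : ‖z + c‖ ≤ r + ‖c‖ := hz ▸ norm_add_le z c
  have hms : MeromorphicOn f (sphere 0 |s|) := fun x _ => hf x trivial
  have hl := hms.circleIntegrable_log_norm
  have i1 : CircleIntegrable ((Complex.re ∘ herglotzRieszKernel 0 (z + c)) • (fun z => Real.log ‖f z‖)) 0 s :=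
    hl.continuousOn_smul (aux_kernel_cont (by simpa using by linarith))
  have i2 : CircleIntegrable ((Complex.re ∘ herglotzRieszKernel 0 z) • (fun z => Real.log ‖f z‖)) 0 s :=
    hl.continuousOn_smul (aux_kernel_cont (by simpa using by linarith))
  rw [← abs_sub_le_iff, ← Real.circleAverage_sub i1 i2]
  refine Real.abs_circleAverage_le_circleAverage_abs.trans ?_
  rw [← smul_eq_mul, ← Real.circleAverage_fun_smul]
  refine Real.circleAverage_mono (i1.sub i2).abs (hl.abs.const_smul) ?_
  intro w hw
  rw [abs_of_pos hs0] at hw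
  have hw : ‖w‖ = s := by simpa using hw
  have hd : 0 < s - r - ‖c‖ := by linarith
  have d1 : s - r - ‖c‖ ≤ ‖w - (z + c)‖ := by
    have := norm_sub_norm_le w (z + c); linarith
  have d2 : s - r - ‖c‖ ≤ ‖w - z‖ := by
    have := norm_sub_norm_le w z; linarith
  have n1 : w - (z + c) ≠ 0 := norm_pos_iff.1 (hd.trans_le d1)
  have n2 : w - z ≠ 0 := norm_pos_iff.1 (hd.trans_le d2)
  have e : herglotzRieszKernel 0 (z + c) w - herglotzRieszKernel 0 z w
      = 2 * c * w / ((w - (z + c)) * (w - z)) := by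
    simp only [herglotzRieszKernel_def, sub_zero]
    rw [div_sub_div _ _ n1 n2]
    congr 1
    ring
  have hk : |(herglotzRieszKernel 0 (z + c) w).re - (herglotzRieszKernel 0 z w).re|
      ≤ 2 * ‖c‖ * s / (s - r - ‖c‖) ^ 2 := by
    rw [← Complex.sub_re]
    refine (Complex.abs_re_le_norm _).trans ?_
    rw [e, norm_div, norm_mul, norm_mul, norm_mul, hw, Complex.norm_two, sq]
    gcongr
  have e3 : ((Complex.re ∘ herglotzRieszKernel 0 (z + c)) • fun z => Real.log ‖f z‖) w -
      ((Complex.re ∘ herglotzRieszKernel 0 z) • fun z => Real.log ‖f z‖) w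
      = ((herglotzRieszKernel 0 (z + c) w).re - (herglotzRieszKernel 0 z w).re) * Real.log ‖f w‖ := by
    simp [sub_mul]
  change |((Complex.re ∘ herglotzRieszKernel 0 (z + c)) • fun z => Real.log ‖f z‖) w -
      ((Complex.re ∘ herglotzRieszKernel 0 z) • fun z => Real.log ‖f z‖) w| ≤ _
  rw [e3, abs_mul]
  exact mul_le_mul_of_nonneg_right hk (abs_nonneg _)

lemma aux_E1 {δ : ℝ} (h0 : 0 < δ) (h1 : δ < 1) {w z u c : ℂ} (hc : ‖w - z‖ = ‖c‖)
    (hw : w ≠ u) (hz : z ≠ u) :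
    Real.log ‖w - u‖ - Real.log ‖z - u‖ ≤ ‖c‖ ^ δ / δ * ‖z - u‖ ^ (-δ) := by
  have hz0 : 0 < ‖z - u‖ := norm_pos_iff.2 (sub_ne_zero.2 hz)
  refine (aux_log_diff_le (sub_ne_zero.2 hw) (sub_ne_zero.2 hz)).trans ?_
  rw [sub_sub_sub_cancel_right, hc]
  refine (aux_log_one_add_le_rpow (by positivity) h0 h1).trans (le_of_eq ?_)
  rw [Real.div_rpow (norm_nonneg _) (norm_nonneg _), Real.rpow_neg (norm_nonneg _)]
  field_simp

lemma aux_E2 {s d : ℝ} (hs : 0 < s) (hd : 0 < d) {w z u c : ℂ} (hc : ‖w - z‖ = ‖c‖)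
    (hu : ‖u‖ ≤ s) (hw : d ≤ s - ‖w‖) (hz : d ≤ s - ‖z‖) :
    Real.log (‖(s:ℂ) ^ 2 - (starRingEnd ℂ) u * z‖ / s)
      - Real.log (‖(s:ℂ) ^ 2 - (starRingEnd ℂ) u * w‖ / s) ≤ ‖c‖ / d := by
  have bw := aux_blaschke_pos (w := w) hu
  have bz := aux_blaschke_pos (w := z) hu
  have pw : 0 < ‖(s:ℂ) ^ 2 - (starRingEnd ℂ) u * w‖ := lt_of_lt_of_le (mul_pos hs (by linarith)) bw
  have pz : 0 < ‖(s:ℂ) ^ 2 - (starRingEnd ℂ) u * z‖ := lt_of_lt_of_le (mul_pos hs (by linarith)) bz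
  rw [Real.log_div pz.ne' hs.ne', Real.log_div pw.ne' hs.ne', sub_sub_sub_cancel_right]
  refine (aux_log_diff_le (norm_pos_iff.1 pz) (norm_pos_iff.1 pw)).trans ?_
  refine (aux_log_one_add_le (by positivity)).trans ?_
  rw [sub_sub_sub_cancel_left, ← mul_sub, norm_mul, Complex.norm_conj, hc,
    div_le_div_iff₀ pw hd]
  calc ‖u‖ * ‖c‖ * d ≤ s * ‖c‖ * (s - ‖w‖) := by gcongr
    _ = ‖c‖ * (s * (s - ‖w‖)) := by ring
    _ ≤ _ := by gcongr

lemma aux_avg_term {r δ : ℝ} (hr : 0 < r) (h0 : 0 < δ) (h1 : δ < 1) (p a k : ℝ) (hp : 0 ≤ p)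
    (ha : 0 ≤ a) (u : ℂ) :
    CircleIntegrable (fun z : ℂ => p * (a * ‖z - u‖ ^ (-δ) + k)) 0 r ∧
    Real.circleAverage (fun z : ℂ => p * (a * ‖z - u‖ ^ (-δ) + k)) 0 r
      ≤ (a * (r ^ (-δ) / (1 - δ)) + k) * p := by
  obtain ⟨hi, hle⟩ := aux_circle u hr h0 h1
  have i1 : CircleIntegrable (fun z : ℂ => a • ‖z - u‖ ^ (-δ)) 0 r := hi.const_smul
  have ik : CircleIntegrable (fun _ : ℂ => k) 0 r := circleIntegrable_const _ _ _
  have i2 : CircleIntegrable (fun z : ℂ => p • (a • ‖z - u‖ ^ (-δ) + k)) 0 r :=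
    (i1.add ik).const_smul
  refine ⟨i2, ?_⟩
  have e : Real.circleAverage (fun z : ℂ => p • (a • ‖z - u‖ ^ (-δ) + k)) 0 r
     = p * (a * Real.circleAverage (fun z : ℂ => ‖z - u‖ ^ (-δ)) 0 r + k) := by
    rw [Real.circleAverage_fun_smul, Real.circleAverage_fun_add i1 ik,
      Real.circleAverage_fun_smul, Real.circleAverage_const, smul_eq_mul, smul_eq_mul]
  simp only [smul_eq_mul] at e
  rw [e, mul_comm]
  gcongr

lemma aux_avg_mono {g h : ℂ → ℝ} {r : ℝ} (hr : r ≠ 0) (hg : CircleIntegrable g 0 r)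
    (hh : CircleIntegrable h 0 r) {B : Set ℂ} (hB : B.Finite)
    (hle : ∀ z, ‖z‖ = |r| → z ∉ B → g z ≤ h z) :
    Real.circleAverage g 0 r ≤ Real.circleAverage h 0 r := by
  rw [Real.circleAverage_def, Real.circleAverage_def, smul_eq_mul, smul_eq_mul]
  apply mul_le_mul_of_nonneg_left _ (by positivity)
  refine intervalIntegral.integral_mono_ae (by positivity) hg hh ?_
  have hc : (circleMap 0 r ⁻¹' B).Countable := hB.countable.preimage_circleMap 0 hr
  filter_upwards [hc.ae_notMem volume] with θ hθ
  exact hle _ (by simp) hθ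

lemma aux_pointwise {f : ℂ → ℂ} (hf : MeromorphicOn f Set.univ) (ht : ∀ x, meromorphicOrderAt f x ≠ ⊤)
    {c : ℂ} {δ r s : ℝ} (hδ0 : 0 < δ) (hδ1 : δ < 1) (hr : 0 < r) (hs : r + ‖c‖ < s) (S : Finset ℂ)
    (hS : ∀ u, MeromorphicOn.divisor f (closedBall 0 s) u ≠ 0 ↔ u ∈ S) :
    ∃ B : Set ℂ, B.Finite ∧ ∀ z, ‖z‖ = r → z ∉ B → logPlus ‖f (z + c) / f z‖ ≤
      2 * ‖c‖ * s / (s - r - ‖c‖) ^ 2 * Real.circleAverage (fun z => |Real.log ‖f z‖|) 0 s +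
      ((∑ u ∈ S, (((MeromorphicOn.divisor f (closedBall 0 s) u).toNat : ℕ) : ℝ) *
        (‖c‖ ^ δ / δ * ‖z - u‖ ^ (-δ) + ‖c‖ / (s - r - ‖c‖))) +
      (∑ u ∈ S, (((-(MeromorphicOn.divisor f (closedBall 0 s) u)).toNat : ℕ) : ℝ) *
        (‖c‖ ^ δ / δ * ‖z - (u - c)‖ ^ (-δ) + ‖c‖ / (s - r - ‖c‖)))) := by
  have hc0 := norm_nonneg c
  have hs0 : 0 < s := by linarith
  have hd : 0 < s - r - ‖c‖ := by linarith
  have hsb : ∀ u ∈ S, ‖u‖ ≤ s := by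
    intro u hu
    by_contra h
    exact (hS u).2 hu (Function.locallyFinsuppWithin.apply_eq_zero_of_notMem _ (by simpa using h))
  obtain ⟨B, hB, hPJ⟩ := aux_PJ hf ht hs0 S hS
  have hA : 0 ≤ Real.circleAverage (fun z => |Real.log ‖f z‖|) 0 s :=
    Real.circleAverage_nonneg_of_nonneg fun x _ => abs_nonneg _
  refine ⟨(B ∪ S) ∪ (fun z => z + c) ⁻¹' (B ∪ S), (hB.union S.finite_toSet).union
    ((hB.union S.finite_toSet).preimage (add_left_injective c).injOn), ?_⟩
  intro z hz hzB
  simp only [Set.mem_union, Set.mem_preimage, not_or, Finset.mem_coe] at hzB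
  obtain ⟨⟨hz1, hz2⟩, hz3, hz4⟩ := hzB
  have hzc : ‖z + c‖ ≤ r + ‖c‖ := hz ▸ norm_add_le z c
  have hRHS : ∀ (n : ℂ → ℕ) (v : ℂ → ℂ), 0 ≤ ∑ u ∈ S, (n u : ℝ) *
        (‖c‖ ^ δ / δ * ‖z - v u‖ ^ (-δ) + ‖c‖ / (s - r - ‖c‖)) := by
    intro n v
    exact Finset.sum_nonneg fun u _ => by positivity
  have hnn : 0 ≤ 2 * ‖c‖ * s / (s - r - ‖c‖) ^ 2 * Real.circleAverage (fun z => |Real.log ‖f z‖|) 0 s +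
      ((∑ u ∈ S, (((MeromorphicOn.divisor f (closedBall 0 s) u).toNat : ℕ) : ℝ) *
        (‖c‖ ^ δ / δ * ‖z - u‖ ^ (-δ) + ‖c‖ / (s - r - ‖c‖))) +
      (∑ u ∈ S, (((-(MeromorphicOn.divisor f (closedBall 0 s) u)).toNat : ℕ) : ℝ) *
        (‖c‖ ^ δ / δ * ‖z - (u - c)‖ ^ (-δ) + ‖c‖ / (s - r - ‖c‖)))) :=
    add_nonneg (by positivity) (add_nonneg (hRHS _ (fun u => u)) (hRHS _ (fun u => u - c)))
  refine max_le ?_ hnn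
  by_cases hfz : f z = 0
  · simpa [hfz] using hnn
  by_cases hfc : f (z + c) = 0
  · simpa [hfc] using hnn
  rw [norm_div, Real.log_div (norm_ne_zero_iff.2 hfc) (norm_ne_zero_iff.2 hfz),
    hPJ z (by simpa using by linarith) hz1, hPJ (z + c) (by simpa using by linarith) hz3,
    add_sub_add_comm]
  refine add_le_add (aux_kdiff hf hs hz).1 ?_
  rw [← Finset.sum_sub_distrib, ← Finset.sum_add_distrib]
  apply Finset.sum_le_sum
  intro u hu
  have n1 : z + c ≠ u := fun h => hz4 (h ▸ hu)
  have n2 : z ≠ u := fun h => hz2 (h ▸ hu)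
  have c1 : ‖(z + c) - z‖ = ‖c‖ := by simp
  have c2 : ‖z - (z + c)‖ = ‖c‖ := by simp
  have a1 := aux_E1 hδ0 hδ1 c1 n1 n2
  have a2 := aux_E1 hδ0 hδ1 c2 n2 n1
  have b1 := aux_E2 hs0 hd c1 (hsb u hu) (by linarith) (by linarith)
  have b2 := aux_E2 hs0 hd c2 (hsb u hu) (by linarith) (by linarith)
  have e : z - (u - c) = z + c - u := by ring
  rw [e, ← mul_sub, aux_toNat (MeromorphicOn.divisor f (closedBall 0 s) u), sub_mul, sub_eq_add_neg,
    ← mul_neg]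
  refine add_le_add (mul_le_mul_of_nonneg_left ?_ (Nat.cast_nonneg _))
    (mul_le_mul_of_nonneg_left ?_ (Nat.cast_nonneg _)) <;> linarith

/-- Intermediate estimate in the key lemma: for `f` meromorphic with `f(0) ≠ 0, ∞`,
`c ∈ ℂ`, `0 < δ < 1`, `r ≥ 1` and `s > r + |c|`,
`m(r, f(z+c)/f(z)) ≤ (2|c|/(s−r−|c|) + 2|c|^δ/(δ(1−δ)r^δ)) (n(s,f) + n(s,1/f))
  + (4|c|s/(s−r−|c|)²) (T(s,f) + log⁺(1/|f(0)|))`,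
where `n(s,f)` and `n(s,1/f)` count the poles and zeros of `f` in `|z| ≤ s` with
multiplicity. -/
theorem proximity_shift_quotient_intermediate_bound (f : ℂ → ℂ)
    (hf : MeromorphicOn f Set.univ) (h0 : AnalyticAt ℂ f 0) (hf0 : f 0 ≠ 0)
    (c : ℂ) (δ r s : ℝ) (hδ0 : 0 < δ) (hδ1 : δ < 1) (hr : 1 ≤ r) (hs : r + ‖c‖ < s) :
    nevm (fun z => f (z + c) / f z) r ≤
      (2 * ‖c‖ / (s - r - ‖c‖) + 2 * ‖c‖ ^ δ / (δ * (1 - δ) * r ^ δ)) *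
          ((nevn f s : ℝ) + (nevn (fun z => (f z)⁻¹) s : ℝ)) +
        4 * ‖c‖ * s / (s - r - ‖c‖) ^ 2 * (nevT f s + logPlus (1 / ‖f 0‖)) := by
  have ht := aux_order_ne_top hf h0 hf0
  have hc0 := norm_nonneg c
  have hr0 : 0 < r := by linarith
  have hs0 : 0 < s := by linarith
  have hd : 0 < s - r - ‖c‖ := by linarith
  have h1δ : 0 < 1 - δ := by linarith
  set D := MeromorphicOn.divisor f (closedBall 0 s) with hD
  obtain ⟨S, hS⟩ : ∃ S : Finset ℂ, ∀ u, MeromorphicOn.divisor f (closedBall 0 s) u ≠ 0 ↔ u ∈ S :=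
    ⟨(D.finiteSupport (isCompact_closedBall 0 s)).toFinset, fun u => by simp [hD]⟩
  obtain ⟨B, hB, hpt⟩ := aux_pointwise hf ht hδ0 hδ1 hr0 hs S hS
  have hA := aux_A hf ht h0 hf0 hs0 S hS
  obtain ⟨hn1, hn2⟩ := aux_counts hf ht S hS
  set A := Real.circleAverage (fun z => |Real.log ‖f z‖|) 0 s with hAdef
  set κ := ‖c‖ / (s - r - ‖c‖) with hκ
  set a := ‖c‖ ^ δ / δ with ha
  have ha0 : 0 ≤ a := by positivity
  have hκ0 : 0 ≤ κ := by positivity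
  have hL : CircleIntegrable (fun z => logPlus ‖f (z + c) / f z‖) 0 r := by
    have hm : MeromorphicOn (fun z => f (z + c) / f z) (sphere 0 |r|) := by
      intro x _
      refine MeromorphicAt.fun_div ?_ (hf x trivial)
      exact (hf (x + c) trivial).comp_analyticAt (g := fun z => z + c) (by fun_prop)
    have := hm.circleIntegrable_posLog_norm
    simpa only [aux_logPlus] using this
  have t1 : ∀ u ∈ S, _ := fun u _ => aux_avg_term hr0 hδ0 hδ1
    (((D u).toNat : ℕ) : ℝ) a κ (Nat.cast_nonneg _) ha0 u
  have t2 : ∀ u ∈ S, _ := fun u _ => aux_avg_term hr0 hδ0 hδ1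
    (((-(D u)).toNat : ℕ) : ℝ) a κ (Nat.cast_nonneg _) ha0 (u - c)
  have I1 := CircleIntegrable.fun_sum S (fun u hu => (t1 u hu).1)
  have I2 := CircleIntegrable.fun_sum S (fun u hu => (t2 u hu).1)
  have I3 : CircleIntegrable (fun _ : ℂ => 2 * ‖c‖ * s / (s - r - ‖c‖) ^ 2 * A) 0 r :=
    circleIntegrable_const _ _ _
  have hm := aux_avg_mono hr0.ne' hL (I3.add (I1.add I2)) hB (by
    intro z hz hzB
    rw [abs_of_pos hr0] at hz
    exact hpt z hz hzB)
  rw [← aux_nevm (fun z => f (z + c) / f z)] at hm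
  refine hm.trans ?_
  rw [Real.circleAverage_add I3 (I1.add I2), Real.circleAverage_add I1 I2, Real.circleAverage_const,
    Real.circleAverage_fun_sum (fun u hu => (t1 u hu).1),
    Real.circleAverage_fun_sum (fun u hu => (t2 u hu).1)]
  have s1 := Finset.sum_le_sum (fun u hu => (t1 u hu).2)
  have s2 := Finset.sum_le_sum (fun u hu => (t2 u hu).2)
  rw [← Finset.mul_sum, ← hn2] at s1
  rw [← Finset.mul_sum, ← hn1] at s2
  have hcoef : a * (r ^ (-δ) / (1 - δ)) + κ
      ≤ 2 * ‖c‖ / (s - r - ‖c‖) + 2 * ‖c‖ ^ δ / (δ * (1 - δ) * r ^ δ) := by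
    have e1 : a * (r ^ (-δ) / (1 - δ)) = ‖c‖ ^ δ / (δ * (1 - δ) * r ^ δ) := by
      rw [ha, Real.rpow_neg hr0.le]
      field_simp
    have e2 : 0 ≤ ‖c‖ ^ δ / (δ * (1 - δ) * r ^ δ) := by positivity
    rw [e1, mul_div_assoc, mul_div_assoc, ← hκ]
    linarith
  have hK : 2 * ‖c‖ * s / (s - r - ‖c‖) ^ 2 * A
      ≤ 4 * ‖c‖ * s / (s - r - ‖c‖) ^ 2 * (nevT f s + logPlus (1 / ‖f 0‖)) := by
    refine (mul_le_mul_of_nonneg_left hA (by positivity)).trans (le_of_eq ?_)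
    ring
  have hfin := mul_le_mul_of_nonneg_right hcoef
    (add_nonneg (Nat.cast_nonneg (α := ℝ) (nevn f s)) (Nat.cast_nonneg (α := ℝ) (nevn (fun z => (f z)⁻¹) s)))
  linarith
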